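/- arXiv:1903.08347 — 2 statements merged into one kernel-verified Lean document; each statement's English description precedes it below -/
import Mathlib

section
/- Let B ≥ 1, let q_1, …, q_B ∈ [0,1], define p_i = q_i ∏_{k=1}^{i−1}(1 − q_k) for 1 ≤ i ≤ B and p_{B+1} = ∏_{k=1}^{B}(1 − q_k), and let X_1, …, X_N be i.i.d. random variables with values in {1, …, B+1} and P(X_n = i) = p_i. Let N_i = #{n : X_n = i}, D_i = N − ∑_{j=1}^{i−1} N_j, and define the estimator q̂_i = N_i / D_i when D_i > 0 and q̂_i = q_i when D_i = 0. Then E[q̂_i] = q_i for every 1 ≤ i ≤ B. -/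
open MeasureTheory ProbabilityTheory

/-- The total mass of the first `i` bins and the survival probability past them add up to one. -/
lemma sum_hazard_mul_prod_eq (q : ℕ → ℝ) (i : ℕ) :
    ∑ j ∈ Finset.range i, q j * ∏ k ∈ Finset.range j, (1 - q k)
      = 1 - ∏ k ∈ Finset.range i, (1 - q k) := by
  induction i with
  | zero => simp
  | succ n ih => rw [Finset.sum_range_succ, ih, Finset.prod_range_succ]; ring

/-- Removing from a finite family the indices with value below `i` leaves those with value at
least `i`. -/
lemma card_sub_sum_card_filter_eq {ι : Type*} [Fintype ι] (x : ι → ℕ) (i : ℕ) :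
    Fintype.card ι - ∑ j ∈ Finset.range i, (Finset.univ.filter (fun n => x n = j)).card
      = (Finset.univ.filter (fun n => i ≤ x n)).card := by
  have hlt : ∑ j ∈ Finset.range i, (Finset.univ.filter (fun n => x n = j)).card
      = (Finset.univ.filter (fun n => x n < i)).card := by
    rw [Finset.card_eq_sum_card_fiberwise (f := x) (t := Finset.range i)]
    · refine Finset.sum_congr rfl fun j hj => ?_
      congr 1
      ext n
      simp only [Finset.mem_filter, Finset.mem_univ, true_and, Finset.mem_range] at hj ⊢
      lia
    · intro n hn
      simpa using hn
  have hsplit := Finset.card_filter_add_card_filter_not (s := (Finset.univ : Finset ι))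
    (fun n => x n < i)
  simp only [not_lt, Finset.card_univ] at hsplit
  lia

/-- The score of one cycle at bin `i`: centred when `c` is the conditional probability of
detection in bin `i`. -/
def binScore (i : ℕ) (c : ℝ) (x : ℕ) : ℝ :=
  (if x = i then 1 else 0) - c * (if i ≤ x then 1 else 0)

/-- The centred ratio estimator is a sum over cycles of the score of that cycle, weighted by a
function of the other cycles only. -/
lemma ratio_sub_eq_sum_binScore {ι : Type*} [Fintype ι] [DecidableEq ι] (x : ι → ℕ) (i : ℕ)
    (c : ℝ) :
    (if 0 < (Finset.univ.filter (fun n => i ≤ x n)).card then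
        ((Finset.univ.filter (fun n => x n = i)).card : ℝ)
          / ((Finset.univ.filter (fun n => i ≤ x n)).card : ℝ) else c) - c
      = ∑ n, binScore i c (x n)
          * (1 + ∑ m : (Finset.univ.erase n : Finset ι), if i ≤ x m then (1 : ℝ) else 0)⁻¹ := by
  set d := (Finset.univ.filter (fun n => i ≤ x n)).card with hd
  have hdsum : (d : ℝ) = ∑ n, if i ≤ x n then (1 : ℝ) else 0 := by simp [hd]
  have hterm : ∀ n, binScore i c (x n)
      * (1 + ∑ m : (Finset.univ.erase n : Finset ι), if i ≤ x m then (1 : ℝ) else 0)⁻¹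
      = binScore i c (x n) * (d : ℝ)⁻¹ := by
    intro n
    by_cases hn : i ≤ x n
    · rw [hdsum, ← Finset.add_sum_erase _ _ (Finset.mem_univ n), if_pos hn,
        Finset.sum_coe_sort (Finset.univ.erase n) (fun m => if i ≤ x m then (1 : ℝ) else 0)]
    · have hne : x n ≠ i := by lia
      simp [binScore, hn, hne]
  have hscore : ∑ n, binScore i c (x n)
      = ((Finset.univ.filter (fun n => x n = i)).card : ℝ) - c * d := by
    simp only [binScore, Finset.sum_sub_distrib, ← Finset.mul_sum, ← hdsum, Finset.sum_boole]
  rw [Finset.sum_congr rfl fun n _ => hterm n, ← Finset.sum_mul, hscore]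
  rcases Nat.eq_zero_or_pos d with h | h
  · simp [h]
  · have : (d : ℝ) ≠ 0 := by positivity
    rw [if_pos h]
    field_simp

/-- The score is centred for a variable with the first-detection distribution. -/
lemma integral_binScore_eq_zero {Ω : Type*} [MeasurableSpace Ω] (μ : Measure Ω)
    [IsProbabilityMeasure μ] (q : ℕ → ℝ) (i : ℕ) (Y : Ω → ℕ) (hY : Measurable Y)
    (hdist : ∀ j ≤ i, μ.real {ω | Y ω = j} = q j * ∏ k ∈ Finset.range j, (1 - q k)) :
    ∫ ω, binScore i (q i) (Y ω) ∂μ = 0 := by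
  have hpre : ∀ s : Set ℕ, MeasurableSet (Y ⁻¹' s) := fun s => hY (MeasurableSet.of_discrete)
  have hlt : μ.real (Y ⁻¹' Set.Iio i) = 1 - ∏ k ∈ Finset.range i, (1 - q k) := by
    have hun : Y ⁻¹' Set.Iio i = ⋃ j ∈ Finset.range i, {ω | Y ω = j} := by
      ext ω
      simp
    rw [hun, measureReal_biUnion_finset, ← sum_hazard_mul_prod_eq]
    · exact Finset.sum_congr rfl fun j hj => hdist j (Finset.mem_range.1 hj).le
    · intro a _ b _ hab
      exact Set.disjoint_left.2 fun ω ha hb => hab (ha.symm.trans hb)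
    · exact fun j _ => hpre {j}
  have hge : μ.real (Y ⁻¹' Set.Ici i) = ∏ k ∈ Finset.range i, (1 - q k) := by
    rw [← Set.compl_Iio, Set.preimage_compl, probReal_compl_eq_one_sub (hpre _), hlt]
    ring
  have heq : (fun ω => binScore i (q i) (Y ω)) = fun ω =>
      (Y ⁻¹' {i}).indicator 1 ω - q i * (Y ⁻¹' Set.Ici i).indicator 1 ω := by
    ext ω
    classical simp [binScore, Set.indicator_apply]
  have hint : ∀ s : Set ℕ, Integrable ((Y ⁻¹' s).indicator (1 : Ω → ℝ)) μ := fun s =>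
    (integrable_const (1 : ℝ)).indicator (hpre s)
  rw [heq, integral_sub (hint _) ((hint _).const_mul _), integral_const_mul,
    integral_indicator_one (hpre _), integral_indicator_one (hpre _), hge]
  exact sub_eq_zero.2 (hdist i le_rfl)

/-- The Coates estimator `q̂ i = Nc i / Dc i` (with the
convention `q̂ i = q i` on the event `Dc i = 0`) is unbiased: `E[q̂ i] = q i`. -/
theorem coates_estimator_unbiased
    {Ω : Type*} [MeasurableSpace Ω] (μ : Measure Ω) [IsProbabilityMeasure μ]
    (B : ℕ) (hB : 1 ≤ B) (N : ℕ)
    (q : ℕ → ℝ) (hq : ∀ i, i < B → q i ∈ Set.Icc (0 : ℝ) 1)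
    (p : ℕ → ℝ)
    (hp : ∀ i, i < B → p i = q i * ∏ k ∈ Finset.range i, (1 - q k))
    (hpB : p B = ∏ k ∈ Finset.range B, (1 - q k))
    (X : Fin N → Ω → ℕ) (hXmeas : ∀ n, Measurable (X n))
    (hXrange : ∀ n ω, X n ω ≤ B)
    (hindep : iIndepFun X μ)
    (hdist : ∀ n i, i ≤ B → μ {ω | X n ω = i} = ENNReal.ofReal (p i))
    (Nc : ℕ → Ω → ℕ)
    (hNc : ∀ i ω, Nc i ω = (Finset.univ.filter (fun n : Fin N => X n ω = i)).card)
    (Dc : ℕ → Ω → ℕ)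
    (hDc : ∀ i ω, Dc i ω = N - ∑ j ∈ Finset.range i, Nc j ω)
    (qhat : ℕ → Ω → ℝ)
    (hqhat : ∀ i ω, qhat i ω =
      if 0 < Dc i ω then (Nc i ω : ℝ) / (Dc i ω : ℝ) else q i)
    (i : ℕ) (hi : i < B) :
    ∫ ω, qhat i ω ∂μ = q i := by
  have hdist' : ∀ n, ∀ j ≤ i,
      μ.real {ω | X n ω = j} = q j * ∏ k ∈ Finset.range j, (1 - q k) := by
    intro n j hj
    have hjB : j < B := by lia
    rw [measureReal_def, hdist n j hjB.le, hp j hjB, ENNReal.toReal_ofReal]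
    refine mul_nonneg (hq j hjB).1 (Finset.prod_nonneg fun k hk => ?_)
    have := (hq k ((Finset.mem_range.1 hk).trans hjB)).2
    linarith
  let w : (n : Fin N) → (↥(Finset.univ.erase n) → ℕ) → ℝ :=
    fun n y => (1 + ∑ m, if i ≤ y m then (1 : ℝ) else 0)⁻¹
  have hrepr : ∀ ω, qhat i ω
      = (∑ n, binScore i (q i) (X n ω) * w n (fun m => X m ω)) + q i := by
    intro ω
    have hD : Dc i ω = (Finset.univ.filter (fun n => i ≤ X n ω)).card := by
      rw [hDc, ← card_sub_sum_card_filter_eq, Fintype.card_fin]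
      simp only [hNc]
    rw [hqhat, hD, hNc, ← sub_eq_iff_eq_add]
    exact ratio_sub_eq_sum_binScore (fun n => X n ω) i (q i)
  have hscore_meas : ∀ n, Measurable fun ω => binScore i (q i) (X n ω) := fun n =>
    (Measurable.of_discrete (f := binScore i (q i))).comp (hXmeas n)
  have hw_meas : ∀ n, Measurable fun ω => w n (fun m => X m ω) := fun n =>
    (Measurable.of_discrete (f := w n)).comp (measurable_pi_lambda _ fun m => hXmeas m)
  have hindep' : ∀ n, IndepFun (fun ω => binScore i (q i) (X n ω))
      (fun ω => w n (fun m => X m ω)) μ := by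
    intro n
    have h := hindep.indepFun_finset {n} (Finset.univ.erase n) (by simp) hXmeas
    exact h.comp (φ := fun y => binScore i (q i) (y ⟨n, by simp⟩)) (ψ := w n)
      Measurable.of_discrete Measurable.of_discrete
  have hscore_int : ∀ n, Integrable (fun ω => binScore i (q i) (X n ω)) μ := fun n =>
    Integrable.of_bound (hscore_meas n).aestronglyMeasurable (1 + |q i|) <| .of_forall fun ω => by
      unfold binScore
      rw [Real.norm_eq_abs]
      refine (abs_sub _ _).trans (add_le_add ?_ ?_) <;> split_ifs <;> simp
  have hw_int : ∀ n, Integrable (fun ω => w n (fun m => X m ω)) μ := fun n =>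
    Integrable.of_bound (hw_meas n).aestronglyMeasurable 1 <| .of_forall fun ω => by
      have hnonneg : 0 ≤ ∑ m : (Finset.univ.erase n : Finset (Fin N)),
          if i ≤ X m ω then (1 : ℝ) else 0 :=
        Finset.sum_nonneg fun m _ => by split_ifs <;> simp
      rw [Real.norm_of_nonneg (by positivity)]
      exact inv_le_one_of_one_le₀ (by linarith)
  have hprod_int : ∀ n, Integrable
      (fun ω => binScore i (q i) (X n ω) * w n (fun m => X m ω)) μ := fun n =>
    (hindep' n).integrable_mul (hscore_int n) (hw_int n)
  simp_rw [hrepr]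
  rw [integral_add (integrable_finsetSum _ fun n _ => hprod_int n) (integrable_const _),
    integral_finsetSum _ fun n _ => hprod_int n]
  have hzero : ∀ n, ∫ ω, binScore i (q i) (X n ω) * w n (fun m => X m ω) ∂μ = 0 := fun n => by
    rw [(hindep' n).integral_fun_mul_eq_mul_integral (hscore_meas n).aestronglyMeasurable
      (hw_meas n).aestronglyMeasurable,
      integral_binScore_eq_zero μ q i (X n) (hXmeas n) (hdist' n), zero_mul]
  simp [hzero]
end

section
/- Let B ≥ 2, let q_1, …, q_B ∈ [0,1], define p_i = q_i ∏_{k=1}^{i−1}(1 − q_k) for 1 ≤ i ≤ B and p_{B+1} = ∏_{k=1}^{B}(1 − q_k), and let X_1, …, X_N be i.i.d. random variables with values in {1, …, B+1} and P(X_n = i) = p_i. Let N_i = #{n : X_n = i}, D_i = N − ∑_{j=1}^{i−1} N_j, and define q̂_i = N_i / D_i when D_i > 0 and q̂_i = q_i when D_i = 0. Then for all i ≠ j, E[(q̂_i − q_i)(q̂_j − q_j)] = 0; that is, the Coates estimates for distinct bins are uncorrelated. -/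
open MeasureTheory ProbabilityTheory

section Counts

variable {ι : Type*} [Fintype ι]

/-- Number of entries of `x` equal to `k`. -/
def binCount (x : ι → ℕ) (k : ℕ) : ℕ :=
  (Finset.univ.filter (fun n => x n = k)).card

/-- Number of entries of `x` not lying in a bin before `k`. -/
def survivorCount (x : ι → ℕ) (k : ℕ) : ℕ :=
  Fintype.card ι - ∑ l ∈ Finset.range k, binCount x l

/-- The Coates estimate of the conditional detection probability of bin `k`, with default value
`r` when there are no survivors. -/
noncomputable def coatesEstimate (r : ℝ) (x : ι → ℕ) (k : ℕ) : ℝ :=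
  if 0 < survivorCount x k then (binCount x k : ℝ) / (survivorCount x k : ℝ) else r

/-- The contribution of one cycle with outcome `a` to `N k - r * D k`. -/
noncomputable def binResidual (r : ℝ) (k a : ℕ) : ℝ :=
  Set.indicator {k} 1 a - r * Set.indicator (Set.Ici k) 1 a

lemma survivorCount_eq_card (x : ι → ℕ) (k : ℕ) :
    survivorCount x k = (Finset.univ.filter (fun n => k ≤ x n)).card := by
  have hlt : (Finset.univ.filter (fun n => x n < k)).card
      = ∑ l ∈ Finset.range k, binCount x l := by
    rw [Finset.card_eq_sum_card_fiberwise (f := x) (t := Finset.range k)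
      (fun n hn => by simpa using hn)]
    refine Finset.sum_congr rfl fun l hl => ?_
    rw [binCount, Finset.filter_filter]
    congr 1
    ext n
    simp only [Finset.mem_range] at hl
    simp only [Finset.mem_filter, Finset.mem_univ, true_and]
    omega
  have hsum := Finset.card_filter_add_card_filter_not (s := (Finset.univ : Finset ι))
    (fun n => x n < k)
  simp only [not_lt, Finset.card_univ] at hsum
  rw [survivorCount, ← hlt]
  omega

lemma sum_binResidual (r : ℝ) (x : ι → ℕ) (k : ℕ) :
    ∑ n, binResidual r k (x n) = binCount x k - r * survivorCount x k := by
  simp only [binResidual, Finset.sum_sub_distrib, ← Finset.mul_sum, survivorCount_eq_card]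
  simp [binCount, Set.indicator_apply]

lemma coatesEstimate_sub (r : ℝ) (x : ι → ℕ) (k : ℕ) :
    coatesEstimate r x k - r = (∑ n, binResidual r k (x n)) / survivorCount x k := by
  rw [sum_binResidual, coatesEstimate]
  split_ifs with h
  · have : (survivorCount x k : ℝ) ≠ 0 := by positivity
    field_simp
  · simp [Nat.eq_zero_of_not_pos h]

variable [DecidableEq ι]

lemma binCount_update {x : ι → ℕ} {n : ι} {j k : ℕ} (hn : j ≤ x n) (hk : k < j) :
    binCount (Function.update x n j) k = binCount x k := by
  unfold binCount
  congr 1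
  ext m
  rcases eq_or_ne m n with rfl | hm
  · simp only [Finset.mem_filter, Finset.mem_univ, true_and, Function.update_self]
    omega
  · simp [hm]

lemma survivorCount_update {x : ι → ℕ} {n : ι} {j k : ℕ} (hn : j ≤ x n) (hk : k ≤ j) :
    survivorCount (Function.update x n j) k = survivorCount x k := by
  unfold survivorCount
  congr 1
  refine Finset.sum_congr rfl fun l hl => binCount_update hn ?_
  exact (Finset.mem_range.mp hl).trans_le hk

lemma coatesEstimate_update (r : ℝ) {x : ι → ℕ} {n : ι} {j k : ℕ} (hn : j ≤ x n) (hk : k < j) :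
    coatesEstimate r (Function.update x n j) k = coatesEstimate r x k := by
  unfold coatesEstimate
  rw [survivorCount_update hn hk.le, binCount_update hn hk]

end Counts

section Probability

variable {Ω ι : Type*} [MeasurableSpace Ω] {μ : Measure Ω} [Fintype ι]

/-- Every real function of finitely many bounded `ℕ`-valued random variables is integrable. -/
lemma integrable_comp_of_bounded_nat [IsFiniteMeasure μ] {B : ℕ} {X : ι → Ω → ℕ}
    (hX : ∀ n, Measurable (X n)) (hB : ∀ n ω, X n ω ≤ B) (F : (ι → ℕ) → ℝ) :
    Integrable (fun ω => F (fun n => X n ω)) μ := by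
  classical
  have hfin : (Set.Iic (fun _ : ι => B)).Finite := Set.finite_Iic _
  obtain ⟨C, hC⟩ := (hfin.image fun x => ‖F x‖).bddAbove
  refine Integrable.of_bound (C := C) ?_ (Filter.Eventually.of_forall fun ω => ?_)
  · exact ((measurable_of_countable F).comp (measurable_pi_lambda _ hX)).aestronglyMeasurable
  · exact hC ⟨_, fun n => hB n ω, rfl⟩

/-- If `h (X n)` is centred and, on the support of `h (x n)`, the factor `F x` does not depend on
`x n`, then `F X * h (X n)` has mean zero. -/
lemma integral_mul_eq_zero_of_update [DecidableEq ι] [IsProbabilityMeasure μ] {X : ι → Ω → ℕ}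
    (hX : ∀ n, Measurable (X n)) (hindep : iIndepFun X μ) (n : ι) (c : ℕ)
    (F : (ι → ℕ) → ℝ) (h : ℕ → ℝ) (hmean : ∫ ω, h (X n ω) ∂μ = 0)
    (hF : ∀ x : ι → ℕ, F x * h (x n) = F (Function.update x n c) * h (x n)) :
    ∫ ω, F (fun m => X m ω) * h (X n ω) ∂μ = 0 := by
  let G : (((Finset.univ.erase n : Finset ι) : Type _) → ℕ) → ℝ := fun y =>
    F (fun m => if hm : m ∈ Finset.univ.erase n then y ⟨m, hm⟩ else c)
  let H : ((({n} : Finset ι) : Type _) → ℕ) → ℝ := fun y =>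
    h (y ⟨n, Finset.mem_singleton_self n⟩)
  have hGH := (hindep.indepFun_finset (Finset.univ.erase n) {n} (by simp) hX).comp
    (measurable_of_countable G) (measurable_of_countable H)
  have hupd : ∀ ω, G (fun m => X m ω) = F (Function.update (fun m => X m ω) n c) := by
    intro ω
    refine congrArg F (funext fun m => ?_)
    rcases eq_or_ne m n with rfl | hm <;> simp [*]
  have hprod := hGH.integral_fun_mul_eq_mul_integral
    ((measurable_of_countable G).comp (by fun_prop)).aestronglyMeasurable
    ((measurable_of_countable H).comp (by fun_prop)).aestronglyMeasurable
  calc ∫ ω, F (fun m => X m ω) * h (X n ω) ∂μ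
      = ∫ ω, G (fun m => X m ω) * H (fun m => X m ω) ∂μ := by
        refine integral_congr_ae (Filter.Eventually.of_forall fun ω => ?_)
        simp only [hupd]
        exact hF fun m => X m ω
    _ = (∫ ω, G (fun m => X m ω) ∂μ) * ∫ ω, h (X n ω) ∂μ := hprod
    _ = 0 := by rw [hmean, mul_zero]

lemma sum_mul_prod_one_sub (q : ℕ → ℝ) (j : ℕ) :
    ∑ k ∈ Finset.range j, q k * ∏ l ∈ Finset.range k, (1 - q l)
      = 1 - ∏ k ∈ Finset.range j, (1 - q k) := by
  induction j with
  | zero => simp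
  | succ j ih => rw [Finset.sum_range_succ, ih, Finset.prod_range_succ]; ring

/-- If the bins up to `j` have the first-detection probabilities with hazard `q`, then the
residual of bin `j` is centred. -/
lemma integral_binResidual_eq_zero [IsProbabilityMeasure μ] {q : ℕ → ℝ} {Y : Ω → ℕ}
    (hY : Measurable Y) (j : ℕ)
    (hdist : ∀ k ≤ j, μ.real {ω | Y ω = k} = q k * ∏ l ∈ Finset.range k, (1 - q l)) :
    ∫ ω, binResidual (q j) j (Y ω) ∂μ = 0 := by
  have hlt : μ.real (Y ⁻¹' Set.Iio j) = 1 - ∏ k ∈ Finset.range j, (1 - q k) := by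
    have hU : Y ⁻¹' Set.Iio j = ⋃ k ∈ Finset.range j, {ω | Y ω = k} := by
      ext ω
      simp
    rw [hU, measureReal_biUnion_finset, ← sum_mul_prod_one_sub]
    · exact Finset.sum_congr rfl fun k hk => hdist k (Finset.mem_range.mp hk).le
    · intro a _ b _ hab
      exact Set.disjoint_left.mpr fun ω ha hb => hab (ha.symm.trans hb)
    · exact fun k _ => hY (measurableSet_singleton k)
  have hge : μ.real (Y ⁻¹' Set.Ici j) = ∏ k ∈ Finset.range j, (1 - q k) := by
    have hc : Y ⁻¹' Set.Ici j = (Y ⁻¹' Set.Iio j)ᶜ := by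
      ext ω
      simp
    rw [hc, probReal_compl_eq_one_sub (hY measurableSet_Iio), hlt]
    ring
  have hmean : ∀ s : Set ℕ, ∫ ω, s.indicator (1 : ℕ → ℝ) (Y ω) ∂μ = μ.real (Y ⁻¹' s) :=
    fun s => integral_indicator_one (hY (MeasurableSet.of_discrete (s := s)))
  have hint : ∀ s : Set ℕ, Integrable (fun ω => s.indicator (1 : ℕ → ℝ) (Y ω)) μ :=
    fun s => (integrable_const (1 : ℝ)).indicator (hY (MeasurableSet.of_discrete (s := s)))
  simp only [binResidual]
  rw [integral_sub (hint _) ((hint _).const_mul _), integral_const_mul, hmean, hmean, hge]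
  exact sub_eq_zero.mpr (hdist j le_rfl)

/-- Coates estimates of an earlier and a later bin are uncorrelated. -/
lemma integral_coatesEstimate_sub_mul_eq_zero [IsProbabilityMeasure μ] {B : ℕ} {q : ℕ → ℝ}
    {X : ι → Ω → ℕ} (hX : ∀ n, Measurable (X n)) (hB : ∀ n ω, X n ω ≤ B)
    (hindep : iIndepFun X μ) {i j : ℕ} (hij : i < j)
    (hdist : ∀ n, ∀ k ≤ j,
      μ.real {ω | X n ω = k} = q k * ∏ l ∈ Finset.range k, (1 - q l)) :
    ∫ ω, (coatesEstimate (q i) (fun n => X n ω) i - q i) *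
      (coatesEstimate (q j) (fun n => X n ω) j - q j) ∂μ = 0 := by
  classical
  let F : (ι → ℕ) → ℝ := fun x => (coatesEstimate (q i) x i - q i) / survivorCount x j
  have hsplit : ∀ x : ι → ℕ, (coatesEstimate (q i) x i - q i) * (coatesEstimate (q j) x j - q j)
      = ∑ n, F x * binResidual (q j) j (x n) := by
    intro x
    rw [coatesEstimate_sub (q j), ← Finset.mul_sum]
    simp only [F]
    ring
  simp only [hsplit]
  rw [integral_finsetSum _ fun n _ => integrable_comp_of_bounded_nat hX hB
    fun x => F x * binResidual (q j) j (x n)]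
  refine Finset.sum_eq_zero fun n _ => integral_mul_eq_zero_of_update hX hindep n j F _
    (integral_binResidual_eq_zero (hX n) j (hdist n)) fun x => ?_
  rcases le_or_gt j (x n) with hn | hn
  · simp only [F, survivorCount_update hn le_rfl, coatesEstimate_update _ hn hij]
  · simp [binResidual, hn.ne, hn]

end Probability

/-- The Coates estimates for distinct bins are uncorrelated:
`E[(q̂ i − q i)(q̂ j − q j)] = 0` for `i ≠ j`. -/
theorem coates_estimates_uncorrelated
    {Ω : Type*} [MeasurableSpace Ω] (μ : Measure Ω) [IsProbabilityMeasure μ]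
    (B : ℕ) (hB : 2 ≤ B) (N : ℕ)
    (q : ℕ → ℝ) (hq : ∀ i, i < B → q i ∈ Set.Icc (0 : ℝ) 1)
    (p : ℕ → ℝ)
    (hp : ∀ i, i < B → p i = q i * ∏ k ∈ Finset.range i, (1 - q k))
    (hpB : p B = ∏ k ∈ Finset.range B, (1 - q k))
    (X : Fin N → Ω → ℕ) (hXmeas : ∀ n, Measurable (X n))
    (hXrange : ∀ n ω, X n ω ≤ B)
    (hindep : iIndepFun X μ)
    (hdist : ∀ n i, i ≤ B → μ {ω | X n ω = i} = ENNReal.ofReal (p i))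
    (Nc : ℕ → Ω → ℕ)
    (hNc : ∀ i ω, Nc i ω = (Finset.univ.filter (fun n : Fin N => X n ω = i)).card)
    (Dc : ℕ → Ω → ℕ)
    (hDc : ∀ i ω, Dc i ω = N - ∑ j ∈ Finset.range i, Nc j ω)
    (qhat : ℕ → Ω → ℝ)
    (hqhat : ∀ i ω, qhat i ω =
      if 0 < Dc i ω then (Nc i ω : ℝ) / (Dc i ω : ℝ) else q i)
    (i j : ℕ) (hi : i < B) (hj : j < B) (hij : i ≠ j) :
    ∫ ω, (qhat i ω - q i) * (qhat j ω - q j) ∂μ = 0 := by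
  have hcoates : ∀ k ω, qhat k ω = coatesEstimate (q k) (fun n => X n ω) k := by
    intro k ω
    simp only [hqhat, hDc, hNc, coatesEstimate, survivorCount, binCount, Fintype.card_fin]
  have hdist_real : ∀ n, ∀ k < B,
      μ.real {ω | X n ω = k} = q k * ∏ l ∈ Finset.range k, (1 - q l) := by
    intro n k hk
    have hpos : 0 ≤ p k := by
      rw [hp k hk]
      refine mul_nonneg (hq k hk).1 (Finset.prod_nonneg fun l hl => ?_)
      exact sub_nonneg.mpr (hq l ((Finset.mem_range.mp hl).trans hk)).2
    rw [measureReal_def, hdist n k hk.le, ENNReal.toReal_ofReal hpos, hp k hk]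
  simp only [hcoates]
  rcases lt_or_gt_of_ne hij with h | h
  · exact integral_coatesEstimate_sub_mul_eq_zero hXmeas hXrange hindep h
      fun n k hk => hdist_real n k (hk.trans_lt hj)
  · simp only [mul_comm (coatesEstimate (q i) _ i - q i)]
    exact integral_coatesEstimate_sub_mul_eq_zero hXmeas hXrange hindep h
      fun n k hk => hdist_real n k (hk.trans_lt hi)
end
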